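/- Both first-level projections of the level-one stabilizer of the Basilica group are all of B: for every g ∈ B there exists h₀ ∈ B with h₀ (false :: w) = false :: g w for all w : List Bool, and there exists h₁ ∈ B with h₁ (true :: w) = true :: g w for all w : List Bool. -/

import Mathlib

/-!
Writing `(g, h)` for the permutation acting as `g` below `false` and as `h` below `true`, the
recursion reads `a = (1, b)`, `b² = (a, a)` and `b⁻¹ a b = (b, 1)`, so both generators occur among
the first coordinates and among the second coordinates of elements of `B`. The permutations that
occur as a given coordinate form a subgroup, which therefore contains `B`.
-/

namespace Basilica

mutual
  /-- Underlying map of the Basilica generator `a`. -/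
  def aF : List Bool → List Bool
    | [] => []
    | false :: w => false :: w
    | true :: w => true :: bF w
  /-- Underlying map of the Basilica generator `b`. -/
  def bF : List Bool → List Bool
    | [] => []
    | false :: w => true :: w
    | true :: w => false :: aF w
end

mutual
  /-- Inverse of `aF`. -/
  def aI : List Bool → List Bool
    | [] => []
    | false :: w => false :: w
    | true :: w => true :: bI w
  /-- Inverse of `bF`. -/
  def bI : List Bool → List Bool
    | [] => []
    | false :: w => true :: aI w
    | true :: w => false :: w
end

theorem basilica_inv : ∀ w : List Bool,
    aI (aF w) = w ∧ bI (bF w) = w ∧ aF (aI w) = w ∧ bF (bI w) = w := by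
  intro w
  induction w with
  | nil => simp [aF, bF, aI, bI]
  | cons x w ih =>
    cases x <;>
      simp [aF, bF, aI, bI, ih.1, ih.2.1, ih.2.2.1, ih.2.2.2]

/-- The Basilica generator `a` as a permutation of the binary tree `List Bool`:
`a [] = []`, `a (false :: w) = false :: w`, `a (true :: w) = true :: b w`. -/
def a : Equiv.Perm (List Bool) :=
  ⟨aF, aI, fun w => (basilica_inv w).1, fun w => (basilica_inv w).2.2.1⟩

/-- The Basilica generator `b` as a permutation of the binary tree `List Bool`:
`b [] = []`, `b (false :: w) = true :: w`, `b (true :: w) = false :: a w`. -/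
def b : Equiv.Perm (List Bool) :=
  ⟨bF, bI, fun w => (basilica_inv w).2.1, fun w => (basilica_inv w).2.2.2⟩

/-- Underlying map of the pair `(g, h)` acting on the two subtrees. -/
def pairF (g h : List Bool → List Bool) : List Bool → List Bool
  | [] => []
  | false :: w => false :: g w
  | true :: w => true :: h w

/-- The permutation of `List Bool` acting as `g` on the subtree below `false`
and as `h` on the subtree below `true`, fixing the root. -/
def pair (g h : Equiv.Perm (List Bool)) : Equiv.Perm (List Bool) :=
  ⟨pairF g h, pairF g.symm h.symm,
    fun w => by cases w with
      | nil => rfl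
      | cons x w => cases x <;> simp [pairF],
    fun w => by cases w with
      | nil => rfl
      | cons x w => cases x <;> simp [pairF]⟩

/-- The Basilica group: the subgroup of `Equiv.Perm (List Bool)` generated by `a` and `b`. -/
def B : Subgroup (Equiv.Perm (List Bool)) := Subgroup.closure {a, b}

end Basilica

namespace Basilica

section Induced

variable {α β : Type*}

/-- The permutations of `α` induced along `f : α → β` by elements of `G`. When `f` is `List.cons x`
and `G` acts on a rooted tree, this is the projection of the stabilizer of the vertex `x` in `G`
to the subtree below `x`. -/
def inducedSubgroup (f : α → β) (G : Subgroup (Equiv.Perm β)) : Subgroup (Equiv.Perm α) where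
  carrier := {g | ∃ h ∈ G, Function.Semiconj f g h}
  one_mem' := ⟨1, G.one_mem, Function.Semiconj.id_right⟩
  mul_mem' := by
    rintro _ _ ⟨h, hG, hf⟩ ⟨k, kG, kf⟩
    exact ⟨h * k, G.mul_mem hG kG, hf.comp_right kf⟩
  inv_mem' := by
    rintro g ⟨h, hG, hf⟩
    exact ⟨h⁻¹, G.inv_mem hG, hf.inverses_right g.right_inv h.left_inv⟩

theorem mem_inducedSubgroup {f : α → β} {G : Subgroup (Equiv.Perm β)} {g : Equiv.Perm α} :
    g ∈ inducedSubgroup f G ↔ ∃ h ∈ G, ∀ x, h (f x) = f (g x) :=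
  exists_congr fun _ => and_congr_right fun _ => forall_congr' fun _ => eq_comm

end Induced

section Pair

variable {g h : Equiv.Perm (List Bool)} {G : Subgroup (Equiv.Perm (List Bool))}

theorem eq_pair {p : Equiv.Perm (List Bool)} (hnil : p [] = [])
    (hfalse : ∀ w, p (false :: w) = false :: g w) (htrue : ∀ w, p (true :: w) = true :: h w) :
    p = pair g h :=
  Equiv.ext fun
    | [] => hnil
    | false :: w => hfalse w
    | true :: w => htrue w

theorem left_mem_inducedSubgroup_of_pair_mem (hG : pair g h ∈ G) :
    g ∈ inducedSubgroup (List.cons false) G :=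
  ⟨pair g h, hG, fun _ => rfl⟩

theorem right_mem_inducedSubgroup_of_pair_mem (hG : pair g h ∈ G) :
    h ∈ inducedSubgroup (List.cons true) G :=
  ⟨pair g h, hG, fun _ => rfl⟩

end Pair

theorem a_nil : a [] = [] := by simp [a, aF]

theorem a_false (w : List Bool) : a (false :: w) = false :: w := by simp [a, aF]

theorem a_true (w : List Bool) : a (true :: w) = true :: b w := by simp [a, b, aF]

theorem b_nil : b [] = [] := by simp [b, bF]

theorem b_false (w : List Bool) : b (false :: w) = true :: w := by simp [b, bF]

theorem b_true (w : List Bool) : b (true :: w) = false :: a w := by simp [a, b, bF]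

theorem a_eq_pair : a = pair 1 b :=
  eq_pair a_nil a_false a_true

theorem b_mul_b_eq_pair : b * b = pair a a := by
  apply eq_pair <;> simp [b_nil, b_false, b_true]

theorem b_inv_mul_a_mul_b_eq_pair : b⁻¹ * a * b = pair b 1 := by
  apply eq_pair <;>
    simp [Equiv.symm_apply_eq, a_nil, a_false, a_true, b_nil, b_false, b_true]

theorem a_mem_B : a ∈ B := Subgroup.subset_closure (Set.mem_insert a {b})

theorem b_mem_B : b ∈ B := Subgroup.subset_closure (Set.mem_insert_of_mem a rfl)

theorem B_le_iff {H : Subgroup (Equiv.Perm (List Bool))} : B ≤ H ↔ a ∈ H ∧ b ∈ H := by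
  rw [B, Subgroup.closure_le, Set.pair_subset_iff, SetLike.mem_coe, SetLike.mem_coe]

theorem pair_a_a_mem_B : pair a a ∈ B :=
  b_mul_b_eq_pair ▸ B.mul_mem b_mem_B b_mem_B

theorem pair_one_b_mem_B : pair 1 b ∈ B :=
  a_eq_pair ▸ a_mem_B

theorem pair_b_one_mem_B : pair b 1 ∈ B :=
  b_inv_mul_a_mul_b_eq_pair ▸ B.mul_mem (B.mul_mem (B.inv_mem b_mem_B) a_mem_B) b_mem_B

theorem B_le_inducedSubgroup_cons_false : B ≤ inducedSubgroup (List.cons false) B :=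
  B_le_iff.2
    ⟨left_mem_inducedSubgroup_of_pair_mem pair_a_a_mem_B,
      left_mem_inducedSubgroup_of_pair_mem pair_b_one_mem_B⟩

theorem B_le_inducedSubgroup_cons_true : B ≤ inducedSubgroup (List.cons true) B :=
  B_le_iff.2
    ⟨right_mem_inducedSubgroup_of_pair_mem pair_a_a_mem_B,
      right_mem_inducedSubgroup_of_pair_mem pair_one_b_mem_B⟩

end Basilica

open Basilica in
/-- Both first-level projections of the level-one stabilizer of the Basilica group
are all of `B`. -/
theorem basilica_level_one_projections (g : Equiv.Perm (List Bool)) (hg : g ∈ B) :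
    (∃ h₀ ∈ B, ∀ w : List Bool, h₀ (false :: w) = false :: g w) ∧
      (∃ h₁ ∈ B, ∀ w : List Bool, h₁ (true :: w) = true :: g w) :=
  ⟨mem_inducedSubgroup.1 (B_le_inducedSubgroup_cons_false hg),
    mem_inducedSubgroup.1 (B_le_inducedSubgroup_cons_true hg)⟩
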